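/- arXiv:0812.0066 — 4 statements merged into one kernel-verified Lean document; each statement's English description precedes it below -/
import Mathlib

section
/- Let Q ∈ ℂ, Q ≠ 0, and let y₁,y₂,y₃ ∈ ℂ be nonzero with y₁⁴ = Q², y₂ = y₁³/Q and y₃ = y₁²/Q. Then D₁ = D₂ = D₃ = 0, where D₁ = −Q/y₁² + y₃ − Q/(y₁²y₃) + 1, D₂ = y₃ − Q/y₂² + 1 − Q/(y₂²y₃), D₃ = y₁ + y₂ − Q/(y₁y₃²) − Q/(y₂y₃²). There are exactly four such triples (y₁,y₂,y₃) for each fixed Q. -/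
/-!
On the torus the three partial derivatives of `𝔓𝔒` factor as `(1 + y₃) (1 - Q / (y₁² y₃))`,
`(1 + y₃) (1 - Q / (y₂² y₃))` and `(y₁ + y₂) (1 - Q / (y₁ y₂ y₃²))`. So a point at which the
monomials `y₁² y₃`, `y₂² y₃` and `y₁ y₂ y₃²` all equal `Q` is critical, and on the curve
`y₂ = y₁³ / Q`, `y₃ = y₁² / Q` each of these three conditions follows from `y₁⁴ = Q²`. Such a
triple is determined by `y₁`, and `Q²` has four fourth roots.
-/

theorem ncard_setOf_pow_eq_pow {R : Type*} [CommRing R] [IsDomain R] {n : ℕ} [NeZero n] {ζ : R}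
    (hζ : IsPrimitiveRoot ζ n) {α : R} (hα : α ≠ 0) : {y : R | y ^ n = α ^ n}.ncard = n := by
  classical
  rw [← Polynomial.nthRootsFinset_toSet (NeZero.pos n), Set.ncard_coe_finset,
    Polynomial.nthRootsFinset_def,
    Multiset.toFinset_card_of_nodup (hζ.nthRoots_nodup (pow_ne_zero n hα)), hζ.card_nthRoots,
    if_pos ⟨α, rfl⟩]

theorem ncard_setOf_pow_eq {K : Type*} [Field K] [IsSepClosed K] (n : ℕ) [NeZero (n : K)] {a : K}
    (ha : a ≠ 0) : {y : K | y ^ n = a}.ncard = n := by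
  have : NeZero n := .of_neZero_natCast K
  obtain ⟨ζ, hζ⟩ := HasEnoughRootsOfUnity.exists_primitiveRoot K n
  obtain ⟨α, rfl⟩ := IsSepClosed.exists_pow_nat_eq a n
  exact ncard_setOf_pow_eq_pow hζ (ne_zero_pow (NeZero.ne n) ha)

section CriticalPoints

variable {K : Type*} [Field K]

/-- The point `(y₁, y₂, y₃)` of the torus is a critical point of the potential `𝔓𝔒`: the partial
derivatives `D₁`, `D₂`, `D₃` vanish there. They are written out as rational functions, so that the
notion makes sense over any field; it is meaningful only for nonzero `y₁`, `y₂`, `y₃`. -/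
def IsCriticalPoint (Q y₁ y₂ y₃ : K) : Prop :=
  -Q / y₁ ^ 2 + y₃ - Q / (y₁ ^ 2 * y₃) + 1 = 0 ∧
    y₃ - Q / y₂ ^ 2 + 1 - Q / (y₂ ^ 2 * y₃) = 0 ∧
      y₁ + y₂ - Q / (y₁ * y₃ ^ 2) - Q / (y₂ * y₃ ^ 2) = 0

theorem isCriticalPoint_iff {Q y₁ y₂ y₃ : K} (h₁ : y₁ ≠ 0) (h₂ : y₂ ≠ 0) (h₃ : y₃ ≠ 0) :
    IsCriticalPoint Q y₁ y₂ y₃ ↔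
      (1 + y₃) * (1 - Q / (y₁ ^ 2 * y₃)) = 0 ∧
        (1 + y₃) * (1 - Q / (y₂ ^ 2 * y₃)) = 0 ∧
          (y₁ + y₂) * (1 - Q / (y₁ * y₂ * y₃ ^ 2)) = 0 := by
  have factor₁ : -Q / y₁ ^ 2 + y₃ - Q / (y₁ ^ 2 * y₃) + 1 =
      (1 + y₃) * (1 - Q / (y₁ ^ 2 * y₃)) := by
    field_simp
    ring
  have factor₂ : y₃ - Q / y₂ ^ 2 + 1 - Q / (y₂ ^ 2 * y₃) =
      (1 + y₃) * (1 - Q / (y₂ ^ 2 * y₃)) := by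
    field_simp
    ring
  have factor₃ : y₁ + y₂ - Q / (y₁ * y₃ ^ 2) - Q / (y₂ * y₃ ^ 2) =
      (y₁ + y₂) * (1 - Q / (y₁ * y₂ * y₃ ^ 2)) := by
    field_simp
    ring
  rw [IsCriticalPoint, factor₁, factor₂, factor₃]

theorem isCriticalPoint_of_monomials_eq {Q y₁ y₂ y₃ : K} (hQ : Q ≠ 0)
    (h₁₃ : y₁ ^ 2 * y₃ = Q) (h₂₃ : y₂ ^ 2 * y₃ = Q) (h₁₂₃ : y₁ * y₂ * y₃ ^ 2 = Q) :
    IsCriticalPoint Q y₁ y₂ y₃ := by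
  have h₁ : y₁ ≠ 0 := by rintro rfl; simp [← h₁₃] at hQ
  have h₂ : y₂ ≠ 0 := by rintro rfl; simp [← h₂₃] at hQ
  have h₃ : y₃ ≠ 0 := by rintro rfl; simp [← h₁₃] at hQ
  simp [isCriticalPoint_iff h₁ h₂ h₃, h₁₃, h₂₃, h₁₂₃, hQ]

/-- The point of the curve `y₂ = y₁³ / Q`, `y₃ = y₁² / Q` with first coordinate `y`. For
`y ^ 4 = Q ^ 2` these are the triples being counted. -/
def criticalTriple (Q y : K) : K × K × K :=
  (y, y ^ 3 / Q, y ^ 2 / Q)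

theorem criticalTriple_injective (Q : K) : Function.Injective (criticalTriple Q) :=
  fun _ _ h => congrArg Prod.fst h

theorem isCriticalPoint_of_pow_four_eq {Q y : K} (hQ : Q ≠ 0) (hy : y ^ 4 = Q ^ 2) :
    IsCriticalPoint Q y (y ^ 3 / Q) (y ^ 2 / Q) := by
  apply isCriticalPoint_of_monomials_eq hQ
  · calc y ^ 2 * (y ^ 2 / Q) = y ^ 4 / Q := by ring
      _ = Q := by rw [hy]; field_simp
  · calc (y ^ 3 / Q) ^ 2 * (y ^ 2 / Q) = (y ^ 4) ^ 2 / Q ^ 3 := by ring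
      _ = Q := by rw [hy]; field_simp
  · calc y * (y ^ 3 / Q) * (y ^ 2 / Q) ^ 2 = (y ^ 4) ^ 2 / Q ^ 3 := by ring
      _ = Q := by rw [hy]; field_simp

theorem setOf_critical_eq_image_criticalTriple {Q : K} (hQ : Q ≠ 0) :
    {p : K × K × K | p.1 ≠ 0 ∧ p.2.1 ≠ 0 ∧ p.2.2 ≠ 0 ∧
        p.1 ^ 4 = Q ^ 2 ∧ p.2.1 = p.1 ^ 3 / Q ∧ p.2.2 = p.1 ^ 2 / Q} =
      criticalTriple Q '' {y | y ^ 4 = Q ^ 2} := by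
  ext p
  constructor
  · rintro ⟨-, -, -, hp, hp₂, hp₃⟩
    exact ⟨p.1, hp, Prod.ext rfl (Prod.ext hp₂.symm hp₃.symm)⟩
  · rintro ⟨y, hy : y ^ 4 = Q ^ 2, rfl⟩
    have hy₀ : y ≠ 0 := ne_zero_pow four_ne_zero (hy ▸ pow_ne_zero 2 hQ)
    exact ⟨hy₀, div_ne_zero (pow_ne_zero 3 hy₀) hQ, div_ne_zero (pow_ne_zero 2 hy₀) hQ,
      hy, rfl, rfl⟩

end CriticalPoints

theorem nondegenerate_critical_points_general {K : Type*} [Field K] [IsSepClosed K]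
    [NeZero (2 : K)] (Q : K) (hQ : Q ≠ 0) :
    (∀ y₁ y₂ y₃ : K, y₁ ^ 4 = Q ^ 2 → y₂ = y₁ ^ 3 / Q → y₃ = y₁ ^ 2 / Q →
      IsCriticalPoint Q y₁ y₂ y₃) ∧
    ({p : K × K × K | p.1 ≠ 0 ∧ p.2.1 ≠ 0 ∧ p.2.2 ≠ 0 ∧
        p.1 ^ 4 = Q ^ 2 ∧ p.2.1 = p.1 ^ 3 / Q ∧ p.2.2 = p.1 ^ 2 / Q}).ncard = 4 := by
  constructor
  · rintro y _ _ hy rfl rfl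
    exact isCriticalPoint_of_pow_four_eq hQ hy
  · have : NeZero ((4 : ℕ) : K) := by
      rw [show ((4 : ℕ) : K) = 2 ^ 2 by norm_num]
      infer_instance
    rw [setOf_critical_eq_image_criticalTriple hQ,
      Set.ncard_image_of_injective _ (criticalTriple_injective Q),
      ncard_setOf_pow_eq 4 (pow_ne_zero 2 hQ)]

/-- The triples `(y₁, y₂, y₃)` with `y₁⁴ = Q²`, `y₂ = y₁³/Q`, `y₃ = y₁²/Q` are critical points
of the potential function (the partial derivatives `D₁, D₂, D₃` vanish), and for each fixed
`Q ≠ 0` there are exactly four such triples. -/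
theorem nondegenerate_critical_points (Q : ℂ) (hQ : Q ≠ 0) :
    (∀ y₁ y₂ y₃ : ℂ, y₁ ≠ 0 → y₂ ≠ 0 → y₃ ≠ 0 →
      y₁ ^ 4 = Q ^ 2 → y₂ = y₁ ^ 3 / Q → y₃ = y₁ ^ 2 / Q →
        -Q / y₁ ^ 2 + y₃ - Q / (y₁ ^ 2 * y₃) + 1 = 0 ∧
        y₃ - Q / y₂ ^ 2 + 1 - Q / (y₂ ^ 2 * y₃) = 0 ∧
        y₁ + y₂ - Q / (y₁ * y₃ ^ 2) - Q / (y₂ * y₃ ^ 2) = 0) ∧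
    ({p : ℂ × ℂ × ℂ | p.1 ≠ 0 ∧ p.2.1 ≠ 0 ∧ p.2.2 ≠ 0 ∧
        p.1 ^ 4 = Q ^ 2 ∧ p.2.1 = p.1 ^ 3 / Q ∧ p.2.2 = p.1 ^ 2 / Q}).ncard = 4 :=
  have ⟨critical, card⟩ := nondegenerate_critical_points_general Q hQ
  ⟨fun y₁ y₂ y₃ _ _ _ => critical y₁ y₂ y₃, card⟩
end

section
/- Let Q ∈ ℂ, Q ≠ 0, and let y₁,y₂,y₃ ∈ ℂ be nonzero. Set D₁ = −Q/y₁² + y₃ − Q/(y₁²y₃) + 1, D₂ = y₃ − Q/y₂² + 1 − Q/(y₂²y₃), D₃ = y₁ + y₂ − Q/(y₁y₃²) − Q/(y₂y₃²). Then D₁ = D₂ = D₃ = 0 holds if and only if one of the following holds: (i) y₂ = −y₁ and y₃ = −1; (ii) y₂ = −y₁ and y₃ = Q/y₁²; (iii) y₂ = Q/y₁ and y₃ = −1; (iv) y₁⁴ = Q², y₂ = y₁³/Q and y₃ = y₁²/Q. -/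
/-!
The partial derivatives factor: up to nonzero factors they are `(y₃ + 1) (y₁² y₃ - Q)`,
`(y₃ + 1) (y₂² y₃ - Q)` and `(y₁ + y₂) (y₁ y₂ y₃² - Q)`. On the plane `y₃ = -1` only the last one
matters and gives families (i) and (iii). Off it, `y₁² y₃ = Q = y₂² y₃` forces `y₂ = ±y₁`: the sign
`-` is family (ii), and the sign `+` leaves `y₁² y₃ = Q = y₁² y₃²`, that is `y₃ = 1` and `y₁² = Q`.
In (iv) these are the points with `y₁² = Q`; those with `y₁² = -Q` already lie in family (i).
-/

section FactoredSystem

variable {R : Type*} [CommRing R] [NoZeroDivisors R] {Q x y z : R}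

theorem eq_and_eq_one_of_sq_mul_eq_of_mul_mul_sq_eq (hx : x ≠ 0) (hz : z ≠ 0) (hyx : y ≠ -x)
    (h₁ : x ^ 2 * z = Q) (h₂ : y ^ 2 * z = Q) (h₃ : x * y * z ^ 2 = Q) : y = x ∧ z = 1 := by
  have hsq : y ^ 2 = x ^ 2 := mul_right_cancel₀ hz (h₂.trans h₁.symm)
  obtain rfl : y = x := (sq_eq_sq_iff_eq_or_eq_neg.mp hsq).resolve_right hyx
  have hz_mul : y ^ 2 * z * z = y ^ 2 * z := by linear_combination h₃ - h₁
  exact ⟨rfl, (mul_eq_left₀ (mul_ne_zero (pow_ne_zero 2 hx) hz)).mp hz_mul⟩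

theorem sq_mul_eq_and_sq_mul_eq_and_iff (hx : x ≠ 0) (hz : z ≠ 0) :
    (x ^ 2 * z = Q ∧ y ^ 2 * z = Q ∧ (y = -x ∨ x * y * z ^ 2 = Q)) ↔
      (y = -x ∧ x ^ 2 * z = Q) ∨ (x ^ 2 = Q ∧ y = x ∧ z = 1) := by
  constructor
  · rintro ⟨h₁, h₂, h₃⟩
    by_cases hyx : y = -x
    · exact .inl ⟨hyx, h₁⟩
    · obtain ⟨rfl, rfl⟩ :=
        eq_and_eq_one_of_sq_mul_eq_of_mul_mul_sq_eq hx hz hyx h₁ h₂ (h₃.resolve_left hyx)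
      exact .inr ⟨by simpa using h₁, rfl, rfl⟩
  · rintro (⟨rfl, rfl⟩ | ⟨rfl, rfl, rfl⟩)
    · exact ⟨rfl, by ring, .inl rfl⟩
    · exact ⟨by ring, by ring, .inr (by ring)⟩

theorem factored_system_iff (hx : x ≠ 0) (hz : z ≠ 0) :
    ((z = -1 ∨ x ^ 2 * z = Q) ∧ (z = -1 ∨ y ^ 2 * z = Q) ∧ (y = -x ∨ x * y * z ^ 2 = Q)) ↔
      (y = -x ∧ z = -1) ∨ (y = -x ∧ x ^ 2 * z = Q) ∨ (x * y = Q ∧ z = -1) ∨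
        (x ^ 2 = Q ∧ y = x ∧ z = 1) := by
  have on_plane : (z = -1 ∧ (y = -x ∨ x * y * z ^ 2 = Q)) ↔
      (y = -x ∧ z = -1) ∨ (x * y = Q ∧ z = -1) := by
    rw [and_comm, or_and_right]
    exact or_congr_right (and_congr_left fun hz' => by simp [hz'])
  rw [← and_assoc, ← or_and_left, or_and_right, on_plane, and_assoc,
    sq_mul_eq_and_sq_mul_eq_and_iff hx hz]
  tauto

end FactoredSystem

section Field

variable {K : Type*} [Field K] {Q x y z : K}

theorem add_one_sub_div_eq_zero_iff (hy : y ≠ 0) (hz : z ≠ 0) :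
    z - Q / y ^ 2 + 1 - Q / (y ^ 2 * z) = 0 ↔ z = -1 ∨ y ^ 2 * z = Q := by
  have factored : z - Q / y ^ 2 + 1 - Q / (y ^ 2 * z) =
      (z + 1) * (y ^ 2 * z - Q) / (y ^ 2 * z) := by
    field_simp
    ring
  have denom_ne_zero : y ^ 2 * z ≠ 0 := mul_ne_zero (pow_ne_zero 2 hy) hz
  rw [factored, div_eq_zero_iff, or_iff_left denom_ne_zero, mul_eq_zero,
    add_eq_zero_iff_eq_neg, sub_eq_zero]

theorem add_sub_div_sub_div_eq_zero_iff (hx : x ≠ 0) (hy : y ≠ 0) (hz : z ≠ 0) :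
    x + y - Q / (x * z ^ 2) - Q / (y * z ^ 2) = 0 ↔ y = -x ∨ x * y * z ^ 2 = Q := by
  have factored : x + y - Q / (x * z ^ 2) - Q / (y * z ^ 2) =
      (x + y) * (x * y * z ^ 2 - Q) / (x * y * z ^ 2) := by
    field_simp
    ring
  have denom_ne_zero : x * y * z ^ 2 ≠ 0 := mul_ne_zero (mul_ne_zero hx hy) (pow_ne_zero 2 hz)
  rw [factored, div_eq_zero_iff, or_iff_left denom_ne_zero, mul_eq_zero,
    add_eq_zero_iff_eq_neg', sub_eq_zero]

theorem pow_four_eq_sq_and_eq_div_iff (hx : x ≠ 0) :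
    (x ^ 4 = Q ^ 2 ∧ y = x ^ 3 / Q ∧ z = x ^ 2 / Q) ↔
      (x ^ 2 = Q ∧ y = x ∧ z = 1) ∨ (x ^ 2 = -Q ∧ y = -x ∧ z = -1) := by
  have pow_four_iff : x ^ 4 = Q ^ 2 ↔ x ^ 2 = Q ∨ x ^ 2 = -Q := by
    rw [← sq_eq_sq_iff_eq_or_eq_neg, ← pow_mul]
  rw [pow_four_iff, or_and_right]
  refine or_congr (and_congr_right ?_) (and_congr_right ?_)
  · rintro rfl
    rw [show x ^ 3 / x ^ 2 = x by field_simp, div_self (pow_ne_zero 2 hx)]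
  · intro h
    obtain rfl : Q = -x ^ 2 := by rw [h, neg_neg]
    rw [show x ^ 3 / -x ^ 2 = -x by field_simp, div_neg, div_self (pow_ne_zero 2 hx)]

theorem critical_points_classification_general {y₁ y₂ y₃ : K}
    (h₁ : y₁ ≠ 0) (h₂ : y₂ ≠ 0) (h₃ : y₃ ≠ 0) :
    (-Q / y₁ ^ 2 + y₃ - Q / (y₁ ^ 2 * y₃) + 1 = 0 ∧
     y₃ - Q / y₂ ^ 2 + 1 - Q / (y₂ ^ 2 * y₃) = 0 ∧
     y₁ + y₂ - Q / (y₁ * y₃ ^ 2) - Q / (y₂ * y₃ ^ 2) = 0) ↔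
    ((y₂ = -y₁ ∧ y₃ = -1) ∨
     (y₂ = -y₁ ∧ y₃ = Q / y₁ ^ 2) ∨
     (y₂ = Q / y₁ ∧ y₃ = -1) ∨
     (y₁ ^ 4 = Q ^ 2 ∧ y₂ = y₁ ^ 3 / Q ∧ y₃ = y₁ ^ 2 / Q)) := by
  have reorder : -Q / y₁ ^ 2 + y₃ - Q / (y₁ ^ 2 * y₃) + 1 =
      y₃ - Q / y₁ ^ 2 + 1 - Q / (y₁ ^ 2 * y₃) := by ring
  rw [reorder, add_one_sub_div_eq_zero_iff h₁ h₃, add_one_sub_div_eq_zero_iff h₂ h₃,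
    add_sub_div_sub_div_eq_zero_iff h₁ h₂ h₃, factored_system_iff h₁ h₃,
    pow_four_eq_sq_and_eq_div_iff h₁, eq_div_iff h₁, eq_div_iff (pow_ne_zero 2 h₁),
    mul_comm y₂ y₁, mul_comm y₃ (y₁ ^ 2)]
  tauto

end Field

/-- Complete classification of the critical points of the potential function: for nonzero
`Q, y₁, y₂, y₃`, the partial derivatives `D₁, D₂, D₃` all vanish if and only if one of the
three one-parameter families or the four non-degenerate critical points occurs. -/
theorem critical_points_classification (Q y₁ y₂ y₃ : ℂ) (hQ : Q ≠ 0)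
    (h₁ : y₁ ≠ 0) (h₂ : y₂ ≠ 0) (h₃ : y₃ ≠ 0) :
    (-Q / y₁ ^ 2 + y₃ - Q / (y₁ ^ 2 * y₃) + 1 = 0 ∧
     y₃ - Q / y₂ ^ 2 + 1 - Q / (y₂ ^ 2 * y₃) = 0 ∧
     y₁ + y₂ - Q / (y₁ * y₃ ^ 2) - Q / (y₂ * y₃ ^ 2) = 0) ↔
    ((y₂ = -y₁ ∧ y₃ = -1) ∨
     (y₂ = -y₁ ∧ y₃ = Q / y₁ ^ 2) ∨
     (y₂ = Q / y₁ ∧ y₃ = -1) ∨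
     (y₁ ^ 4 = Q ^ 2 ∧ y₂ = y₁ ^ 3 / Q ∧ y₃ = y₁ ^ 2 / Q)) :=
  critical_points_classification_general h₁ h₂ h₃
end

section
/- Fix n ≥ 4 and λ > 0. For x ∈ ℂⁿ \ {0} with ‖x‖² = ∑_{i=1}^n |xᵢ|², define ν₂(x) = i·λ·(x₁·conj(x₂) − conj(x₁)·x₂)/‖x‖² (a real number) and ν_k(x) = λ·∑_{i=1}^k |xᵢ|² / ‖x‖² for k = 3, …, n−1. Then the image of the set {x ∈ ℂⁿ \ {0} : x₁² + x₂² + x₃² = 0} under the map (ν₂, ν₃, …, ν_{n−1}) equals the polytope {(u₂, …, u_{n−1}) ∈ ℝ^{n−2} : λ ≥ u_{n−1} ≥ u_{n−2} ≥ ⋯ ≥ u₃ ≥ |u₂|}. -/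
open Complex Finset

/-!
The chain `u₃ ≤ ⋯ ≤ u_{n-1} ≤ λ` holds because the partial sums `∑_{i ≤ k} |xᵢ|²` increase with `k`
up to `‖x‖²`, and `|u₂| ≤ u₃` is AM-GM, since the numerator of `ν₂` is `2 λ Im(conj x₁ · x₂)`.

Conversely, given `u`, choose the first three coordinates first: the isotropic vectors
`√(s/2) · (1, i τ, i √(1 - τ²))` with `τ = t/s` realise every pair
`t = 2 Im(conj x₁ · x₂)`, `s = |x₁|² + |x₂|² + |x₃|²` with `|t| ≤ s`. The remaining coordinates are
unconstrained by the quadric, so the choices `|x_{k+1}|² = u_{k+1} - u_k` with `u_n = λ` produce a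
vector with `‖x‖² = λ`, for which the normalising factor `λ / ‖x‖²` is `1`.
-/

section PartialNormSq

variable {n : ℕ}

/-- The squared norm `|x₁|² + ⋯ + |x_k|²` of the first `k` coordinates of `x`; it is `‖x‖²` as soon
as `n ≤ k`. -/
def partialNormSq (x : Fin n → ℂ) (k : ℕ) : ℝ :=
  ∑ i ∈ univ.filter (fun i : Fin n => i.val < k), normSq (x i)

lemma partialNormSq_nonneg (x : Fin n → ℂ) (k : ℕ) : 0 ≤ partialNormSq x k :=
  sum_nonneg fun _ _ => normSq_nonneg _

lemma partialNormSq_mono (x : Fin n → ℂ) : Monotone (partialNormSq x) := fun _ _ hkl =>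
  sum_le_sum_of_subset_of_nonneg (monotone_filter_right _ fun _ _ hi => hi.trans_le hkl)
    fun _ _ _ => normSq_nonneg _

lemma partialNormSq_self (x : Fin n → ℂ) : partialNormSq x n = ∑ i, normSq (x i) := by
  simp [partialNormSq]

lemma partialNormSq_eq_sum_castLE (x : Fin n → ℂ) {k : ℕ} (hk : k ≤ n) :
    partialNormSq x k = ∑ i : Fin k, normSq (x (Fin.castLE hk i)) := by
  have filter_eq_map : univ.filter (fun i : Fin n => i.val < k) = univ.map (Fin.castLEEmb hk) := by
    ext i
    simp only [mem_filter, mem_univ, true_and, mem_map]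
    exact ⟨fun hi => ⟨⟨i, hi⟩, rfl⟩, by rintro ⟨j, rfl⟩; exact j.isLt⟩
  rw [partialNormSq, filter_eq_map, sum_map]
  rfl

lemma partialNormSq_succ (x : Fin n → ℂ) {k : ℕ} (hk : k < n) :
    partialNormSq x (k + 1) = partialNormSq x k + normSq (x ⟨k, hk⟩) := by
  rw [partialNormSq_eq_sum_castLE x hk, partialNormSq_eq_sum_castLE x hk.le, Fin.sum_univ_castSucc]
  rfl

lemma exists_extension_partialNormSq_eq {m : ℕ} (hm : m ≤ n) (z : Fin m → ℂ) {S : ℕ → ℝ}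
    (hz : ∑ i, normSq (z i) = S m) (hS : ∀ k, m ≤ k → k < n → S k ≤ S (k + 1)) :
    ∃ x : Fin n → ℂ, (∀ i, x (Fin.castLE hm i) = z i) ∧
      ∀ k, m ≤ k → k ≤ n → partialNormSq x k = S k := by
  let x : Fin n → ℂ := fun i => if h : i.val < m then z ⟨i, h⟩ else (√(S (i + 1) - S i) : ℝ)
  have hxz : ∀ i, x (Fin.castLE hm i) = z i := fun i => dif_pos i.isLt
  refine ⟨x, hxz, fun k hmk => ?_⟩
  induction k, hmk using Nat.le_induction with
  | base =>
    intro _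
    simp only [partialNormSq_eq_sum_castLE x hm, hxz, hz]
  | succ k hmk ih =>
    intro hk
    have hxk : x ⟨k, hk⟩ = (√(S (k + 1) - S k) : ℝ) := dif_neg hmk.not_gt
    rw [partialNormSq_succ x hk, ih (Nat.le_of_lt hk), hxk, normSq_ofReal,
      Real.mul_self_sqrt (sub_nonneg.2 (hS k hmk hk)), add_sub_cancel]

end PartialNormSq

section IsotropicVectors

lemma abs_two_mul_im_conj_mul_le (a b : ℂ) :
    |2 * ((starRingEnd ℂ) a * b).im| ≤ normSq a + normSq b := by
  calc |2 * ((starRingEnd ℂ) a * b).im|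
      = 2 * |((starRingEnd ℂ) a * b).im| := by rw [abs_mul, abs_two]
    _ ≤ 2 * ‖(starRingEnd ℂ) a * b‖ := by gcongr; exact abs_im_le_norm _
    _ = 2 * ‖a‖ * ‖b‖ := by rw [norm_mul, norm_conj, mul_assoc]
    _ ≤ ‖a‖ ^ 2 + ‖b‖ ^ 2 := two_mul_le_add_sq _ _
    _ = normSq a + normSq b := by rw [Complex.sq_norm, Complex.sq_norm]

lemma exists_isotropic_im_conj_mul_eq_sum_normSq_eq {s t : ℝ} (hts : |t| ≤ s) :
    ∃ z : Fin 3 → ℂ, z 0 ^ 2 + z 1 ^ 2 + z 2 ^ 2 = 0 ∧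
      2 * ((starRingEnd ℂ) (z 0) * z 1).im = t ∧ ∑ i, normSq (z i) = s := by
  have hs : 0 ≤ s := (abs_nonneg t).trans hts
  obtain ⟨r, hr⟩ : ∃ r : ℝ, r ^ 2 = s / 2 := ⟨√(s / 2), Real.sq_sqrt (by positivity)⟩
  obtain ⟨τ, hτ, hsτ⟩ : ∃ τ : ℝ, |τ| ≤ 1 ∧ s * τ = t := by
    refine ⟨t / s, ?_, mul_div_cancel_of_imp' fun h => ?_⟩
    · rw [abs_div, abs_of_nonneg hs]
      exact div_le_one_of_le₀ hts hs
    · exact abs_nonpos_iff.1 (h ▸ hts)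
  obtain ⟨σ, hσ⟩ : ∃ σ : ℝ, σ ^ 2 = 1 - τ ^ 2 :=
    ⟨√(1 - τ ^ 2), Real.sq_sqrt (sub_nonneg.2 ((sq_le_one_iff_abs_le_one τ).2 hτ))⟩
  have hσ' : (σ : ℂ) ^ 2 = 1 - (τ : ℂ) ^ 2 := by exact_mod_cast hσ
  refine ⟨![r, (r * τ : ℝ) * I, (r * σ : ℝ) * I], ?_, ?_, ?_⟩
  · simp only [Matrix.cons_val, ofReal_mul, mul_pow, I_sq, hσ']
    ring
  · simp only [Matrix.cons_val, conj_ofReal, im_ofReal_mul, mul_I_im, ofReal_re]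
    linear_combination 2 * τ * hr + hsτ
  · simp only [Fin.sum_univ_three, Matrix.cons_val, normSq_mul, normSq_ofReal, normSq_I]
    linear_combination 2 * hr + r ^ 2 * hσ

end IsotropicVectors

section GelfandCetlin

variable {n : ℕ}

/-- The map `(ν₂, …, ν_{n-1})` on `ℂⁿ`. The coordinate `ν_k` has index `k - 2`, and both divisions
give `0` at `x = 0`. -/
noncomputable def gelfandCetlinMap (lam : ℝ) (x : Fin n → ℂ) : Fin (n - 2) → ℝ := fun j =>
  have hn := j.pos
  if j.val = 0 then
    (I * (lam : ℂ) *
        (x ⟨0, by omega⟩ * (starRingEnd ℂ) (x ⟨1, by omega⟩) -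
          (starRingEnd ℂ) (x ⟨0, by omega⟩) * x ⟨1, by omega⟩)).re / ∑ i, normSq (x i)
  else
    lam * partialNormSq x (j.val + 2) / ∑ i, normSq (x i)

/-- The polytope `λ ≥ u_{n-1} ≥ ⋯ ≥ u₃ ≥ |u₂|`, with `u_k` stored at index `k - 2`. -/
def gelfandCetlinPolytope (hn : 3 < n) (lam : ℝ) : Set (Fin (n - 2) → ℝ) :=
  {u | u ⟨n - 3, by omega⟩ ≤ lam ∧
    (∀ (j : ℕ) (_ : 1 ≤ j) (h : j + 1 < n - 2), u ⟨j, Nat.lt_of_succ_lt h⟩ ≤ u ⟨j + 1, h⟩) ∧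
    |u ⟨0, by omega⟩| ≤ u ⟨1, by omega⟩}

lemma gelfandCetlinMap_zero (hn : 2 < n) (lam : ℝ) (x : Fin n → ℂ) :
    gelfandCetlinMap lam x ⟨0, by omega⟩ =
      lam * (2 * ((starRingEnd ℂ) (x ⟨0, by omega⟩) * x ⟨1, by omega⟩).im) /
        partialNormSq x n := by
  rw [partialNormSq_self]
  simp only [gelfandCetlinMap, if_true]
  congr 1
  simp only [mul_re, mul_im, sub_re, sub_im, conj_re, conj_im, I_re, I_im, ofReal_re, ofReal_im]
  ring

lemma gelfandCetlinMap_of_ne_zero (lam : ℝ) (x : Fin n → ℂ) {j : Fin (n - 2)} (hj : j.val ≠ 0) :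
    gelfandCetlinMap lam x j = lam * partialNormSq x (j.val + 2) / partialNormSq x n := by
  rw [partialNormSq_self]
  exact if_neg hj

lemma gelfandCetlinMap_mem_gelfandCetlinPolytope (hn : 3 < n) {lam : ℝ} (hlam : 0 ≤ lam)
    (x : Fin n → ℂ) :
    gelfandCetlinMap lam x ∈ gelfandCetlinPolytope hn lam := by
  have hN : 0 ≤ partialNormSq x n := partialNormSq_nonneg x n
  refine ⟨?_, fun j hj h => ?_, ?_⟩
  · rw [gelfandCetlinMap_of_ne_zero _ _ (by simp only; omega), mul_div_assoc]
    exact mul_le_of_le_one_right hlam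
      (div_le_one_of_le₀ (partialNormSq_mono x (by simp only; omega)) hN)
  · rw [gelfandCetlinMap_of_ne_zero _ _ (by simp only; omega),
      gelfandCetlinMap_of_ne_zero _ _ (by simp only; omega)]
    gcongr
    exact partialNormSq_mono x (by simp only; omega)
  · have first_two_le : normSq (x ⟨0, by omega⟩) + normSq (x ⟨1, by omega⟩) ≤
        partialNormSq x 3 := by
      rw [partialNormSq_eq_sum_castLE x (by omega), Fin.sum_univ_three]
      exact le_add_of_nonneg_right (normSq_nonneg _)
    rw [gelfandCetlinMap_zero (by omega), gelfandCetlinMap_of_ne_zero _ _ one_ne_zero,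
      abs_div, abs_mul, abs_of_nonneg hN, abs_of_nonneg hlam]
    gcongr
    exact (abs_two_mul_im_conj_mul_le _ _).trans first_two_le

/-- The sequence `u₂, …, u_{n-1}, λ, λ, …`, indexed so that its value at `k ≥ 2` is `u_k`. -/
def extendByTop (lam : ℝ) (u : Fin (n - 2) → ℝ) (k : ℕ) : ℝ :=
  if h : k - 2 < n - 2 then u ⟨k - 2, h⟩ else lam

lemma extendByTop_add_two (lam : ℝ) (u : Fin (n - 2) → ℝ) (j : Fin (n - 2)) :
    extendByTop lam u (j.val + 2) = u j :=
  dif_pos j.isLt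

lemma extendByTop_self (lam : ℝ) (u : Fin (n - 2) → ℝ) : extendByTop lam u n = lam :=
  dif_neg (lt_irrefl _)

lemma extendByTop_le_succ {hn : 3 < n} {lam : ℝ} {u : Fin (n - 2) → ℝ}
    (hu : u ∈ gelfandCetlinPolytope hn lam) {k : ℕ} (hk : 3 ≤ k) (hkn : k < n) :
    extendByTop lam u k ≤ extendByTop lam u (k + 1) := by
  obtain ⟨j, rfl⟩ := Nat.exists_eq_add_of_le' (show 2 ≤ k by omega)
  rw [extendByTop_add_two lam u ⟨j, by omega⟩]
  rcases (Nat.succ_le_of_lt hkn).eq_or_lt with rfl | hlt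
  · rw [extendByTop_self]
    exact hu.1
  · rw [show j + 2 + 1 = j + 1 + 2 from rfl, extendByTop_add_two lam u ⟨j + 1, by omega⟩]
    exact hu.2.1 j (by omega) (by omega)

lemma exists_isotropic_gelfandCetlinMap_eq {hn : 3 < n} {lam : ℝ} (hlam : 0 < lam)
    {u : Fin (n - 2) → ℝ} (hu : u ∈ gelfandCetlinPolytope hn lam) :
    ∃ x : Fin n → ℂ, (x ≠ 0 ∧
      x ⟨0, by omega⟩ ^ 2 + x ⟨1, by omega⟩ ^ 2 + x ⟨2, by omega⟩ ^ 2 = 0) ∧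
      gelfandCetlinMap lam x = u := by
  obtain ⟨z, hz_isotropic, hz_im, hz_sum⟩ := exists_isotropic_im_conj_mul_eq_sum_normSq_eq hu.2.2
  obtain ⟨x, hxz, hx⟩ := exists_extension_partialNormSq_eq (show 3 ≤ n by omega) z
    (S := extendByTop lam u) (hz_sum.trans (extendByTop_add_two lam u ⟨1, by omega⟩).symm)
    fun _ => extendByTop_le_succ hu
  have hx_total : partialNormSq x n = lam := by
    rw [hx n (by omega) le_rfl, extendByTop_self]
  have hx₀ : x ⟨0, by omega⟩ = z 0 := hxz 0
  have hx₁ : x ⟨1, by omega⟩ = z 1 := hxz 1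
  have hx₂ : x ⟨2, by omega⟩ = z 2 := hxz 2
  refine ⟨x, ⟨?_, by rwa [hx₀, hx₁, hx₂]⟩, funext fun j => ?_⟩
  · rintro rfl
    simp [partialNormSq, hlam.ne] at hx_total
  · rcases eq_or_ne j ⟨0, by omega⟩ with rfl | hj
    · rw [gelfandCetlinMap_zero (by omega), hx_total, mul_div_cancel_left₀ _ hlam.ne', hx₀, hx₁,
        hz_im]
    · have hj₀ : j.val ≠ 0 := fun h => hj (Fin.ext h)
      rw [gelfandCetlinMap_of_ne_zero _ _ hj₀, hx_total, mul_div_cancel_left₀ _ hlam.ne',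
        hx _ (by omega) (by omega), extendByTop_add_two]

end GelfandCetlin

/-- For `n ≥ 4` and `λ > 0`, the image of
`{x ∈ ℂⁿ \ {0} : x₁² + x₂² + x₃² = 0}` under the moment map `(ν₂, ν₃, …, ν_{n−1})`,
where `ν₂(x) = iλ(x₁ conj(x₂) − conj(x₁) x₂)/‖x‖²` and
`ν_k(x) = λ ∑_{i≤k} |xᵢ|² / ‖x‖²` for `3 ≤ k ≤ n−1`, equals the Gelfand–Cetlin polytope
`{u ∈ ℝ^{n−2} : λ ≥ u_{n−1} ≥ ⋯ ≥ u₃ ≥ |u₂|}`. -/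
theorem moment_map_image_eq_gelfand_cetlin_polytope (n : ℕ) (hn : 4 ≤ n) (lam : ℝ)
    (hlam : 0 < lam) :
    (fun x : Fin n → ℂ => fun j : Fin (n - 2) =>
        if j.val = 0 then
          (Complex.I * (lam : ℂ) *
              (x ⟨0, by omega⟩ * (starRingEnd ℂ) (x ⟨1, by omega⟩) -
                (starRingEnd ℂ) (x ⟨0, by omega⟩) * x ⟨1, by omega⟩)).re /
            ∑ i : Fin n, normSq (x i)
        else
          lam * (∑ i ∈ univ.filter (fun i : Fin n => i.val < j.val + 2), normSq (x i)) /
            ∑ i : Fin n, normSq (x i)) ''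
      {x : Fin n → ℂ | x ≠ 0 ∧
        x ⟨0, by omega⟩ ^ 2 + x ⟨1, by omega⟩ ^ 2 + x ⟨2, by omega⟩ ^ 2 = 0} =
    {u : Fin (n - 2) → ℝ |
      u ⟨n - 3, by omega⟩ ≤ lam ∧
      (∀ (j : ℕ) (_ : 1 ≤ j) (h : j + 1 < n - 2), u ⟨j, by omega⟩ ≤ u ⟨j + 1, h⟩) ∧
      |u ⟨0, by omega⟩| ≤ u ⟨1, by omega⟩} := by
  refine Set.Subset.antisymm ?_ fun u hu => exists_isotropic_gelfandCetlinMap_eq (hn := hn) hlam hu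
  rintro _ ⟨x, -, rfl⟩
  exact gelfandCetlinMap_mem_gelfandCetlinPolytope hn hlam.le x
end

section
/- Consider the map s : ℙ¹ → ℙ³ sending [z₀:z₁] to [|z₀|²−|z₁|² : −2·Im(z₀·conj(z₁)) : 2·Re(z₀·conj(z₁)) : i·(|z₀|²+|z₁|²)]. Then the image of s equals the set of points [x₁:x₂:x₃:x₄] ∈ ℙ³ admitting a homogeneous representative (x₁,x₂,x₃,x₄) with x₁² + x₂² + x₃² + x₄² = 0, x₁, x₂, x₃ ∈ ℝ and x₄ ∈ i·ℝ. -/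
/-!
The vector `(|z₀|² - |z₁|², -2 Im (z₀ z̄₁), 2 Re (z₀ z̄₁), i (|z₀|² + |z₁|²))` records the entries
`p = |z₀|²`, `q = |z₁|²`, `w = z₀ z̄₁` of the Hermitian matrix `z zᴴ`. Its equation
`x₁² + x₂² + x₃² + x₄² = 0` says `|w|² = p q`, and any `p, q ≥ 0` and `w` with `|w|² = p q` arise
from some `z`: give `z₀` and `z₁` the moduli `√p` and `√q` and let `z₁` carry the phase of `w̄`.
On the quadric `p, q ≥ 0` amounts to `Im x₄ ≥ 0`, which a change of sign of `x` achieves.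
-/

open Complex
open scoped LinearAlgebra.Projectivization

theorem exists_norm_sq_eq_and_mul_conj_eq {𝕜 : Type*} [RCLike 𝕜] {p q : ℝ}
    (hp : 0 ≤ p) (hq : 0 ≤ q) {w : 𝕜} (hw : ‖w‖ ^ 2 = p * q) :
    ∃ z₀ z₁ : 𝕜, ‖z₀‖ ^ 2 = p ∧ ‖z₁‖ ^ 2 = q ∧ z₀ * (starRingEnd 𝕜) z₁ = w := by
  obtain ⟨u, hu, hwu⟩ := RCLike.exists_norm_eq_mul_self w
  have norm_w : √p * √q = ‖w‖ := by
    rw [← Real.sqrt_mul hp, ← hw, Real.sqrt_sq (norm_nonneg w)]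
  refine ⟨(√p : ℝ), u * (√q : ℝ), by simp [Real.sq_sqrt hp], by simp [hu, Real.sq_sqrt hq], ?_⟩
  calc ((√p : ℝ) : 𝕜) * (starRingEnd 𝕜) (u * (√q : ℝ))
      = (starRingEnd 𝕜) u * ((√p * √q : ℝ) : 𝕜) := by
        rw [map_mul, RCLike.conj_ofReal]; push_cast; ring
    _ = (starRingEnd 𝕜) u * u * w := by rw [norm_w, hwu, mul_assoc]
    _ = w := by simp [RCLike.conj_mul, hu]

/-- The homogeneous coordinates on `ℂ²` of the embedding `ℙ¹ × ℙ¹ → ℙ³` onto the quadric,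
restricted to the anti-diagonal `([z], [z̄])`. -/
noncomputable def antidiagonalVec (z : Fin 2 → ℂ) : Fin 4 → ℂ :=
  ![((normSq (z 0) - normSq (z 1) : ℝ) : ℂ),
    ((-2 * (z 0 * (starRingEnd ℂ) (z 1)).im : ℝ) : ℂ),
    ((2 * (z 0 * (starRingEnd ℂ) (z 1)).re : ℝ) : ℂ),
    I * ((normSq (z 0) + normSq (z 1) : ℝ) : ℂ)]

/-- The real points of the quadric cone `∑ xᵢ² = 0` in `ℂ⁴`, for the real structure whose real
points have `x₁, x₂, x₃ ∈ ℝ` and `x₄ ∈ iℝ`. The code numbers the coordinates from `0`. -/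
def realQuadricCone : Set (Fin 4 → ℂ) :=
  {x | x 0 ^ 2 + x 1 ^ 2 + x 2 ^ 2 + x 3 ^ 2 = 0 ∧
    (x 0).im = 0 ∧ (x 1).im = 0 ∧ (x 2).im = 0 ∧ (x 3).re = 0}

theorem neg_mem_realQuadricCone {x : Fin 4 → ℂ} (hx : x ∈ realQuadricCone) :
    -x ∈ realQuadricCone := by
  simpa [realQuadricCone] using hx

theorem sq_add_sq_add_sq_eq_of_mem_realQuadricCone {x : Fin 4 → ℂ} (hx : x ∈ realQuadricCone) :
    (x 0).re ^ 2 + (x 1).re ^ 2 + (x 2).re ^ 2 = (x 3).im ^ 2 := by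
  obtain ⟨hquadric, h0, h1, h2, h3⟩ := hx
  have := congrArg re hquadric
  simp only [pow_two, add_re, mul_re, h0, h1, h2, h3, zero_re] at this
  linarith

theorem antidiagonalVec_ne_zero {z : Fin 2 → ℂ} (hz : z ≠ 0) : antidiagonalVec z ≠ 0 := by
  contrapose! hz
  have sum_eq_zero : normSq (z 0) + normSq (z 1) = 0 := by
    simpa [antidiagonalVec] using congrArg im (congrFun hz 3)
  obtain ⟨h0, h1⟩ :=
    (add_eq_zero_iff_of_nonneg (normSq_nonneg _) (normSq_nonneg _)).mp sum_eq_zero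
  ext i
  fin_cases i
  exacts [normSq_eq_zero.mp h0, normSq_eq_zero.mp h1]

theorem antidiagonalVec_smul (a : ℂ) (z : Fin 2 → ℂ) :
    antidiagonalVec (a • z) = (normSq a : ℂ) • antidiagonalVec z := by
  have mul_conj_smul : a * z 0 * (starRingEnd ℂ) (a * z 1) =
      (normSq a : ℂ) * (z 0 * (starRingEnd ℂ) (z 1)) := by
    rw [map_mul, ← mul_conj]; ring
  ext i
  fin_cases i <;>
    simp only [antidiagonalVec, Pi.smul_apply, smul_eq_mul, mul_conj_smul, normSq_mul,
      re_ofReal_mul, im_ofReal_mul, Fin.reduceFinMk, Fin.zero_eta, Fin.mk_one, Matrix.cons_val] <;>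
    push_cast <;> ring

theorem antidiagonalVec_mem_realQuadricCone (z : Fin 2 → ℂ) :
    antidiagonalVec z ∈ realQuadricCone := by
  refine ⟨?_, by simp [antidiagonalVec]⟩
  set w := z 0 * (starRingEnd ℂ) (z 1) with hw
  have normSq_w : w.re ^ 2 + w.im ^ 2 = normSq (z 0) * normSq (z 1) := by
    rw [pow_two, pow_two, ← normSq_apply, hw, normSq_mul, normSq_conj]
  have real_eq : (normSq (z 0) - normSq (z 1)) ^ 2 + (-2 * w.im) ^ 2 + (2 * w.re) ^ 2 -
      (normSq (z 0) + normSq (z 1)) ^ 2 = 0 := by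
    linear_combination 4 * normSq_w
  simp only [antidiagonalVec, Matrix.cons_val, mul_pow I, I_sq, neg_one_mul, ← sub_eq_add_neg,
    ← hw]
  exact_mod_cast real_eq

theorem mem_range_antidiagonalVec {x : Fin 4 → ℂ} (hx : x ∈ realQuadricCone)
    (hx3 : 0 ≤ (x 3).im) : x ∈ Set.range antidiagonalVec := by
  have cone_eq := sq_add_sq_add_sq_eq_of_mem_realQuadricCone hx
  obtain ⟨-, h0, h1, h2, h3⟩ := hx
  obtain ⟨neg_le, le⟩ : -(x 3).im ≤ (x 0).re ∧ (x 0).re ≤ (x 3).im :=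
    abs_le_of_sq_le_sq' (by linarith [sq_nonneg (x 1).re, sq_nonneg (x 2).re]) hx3
  have norm_sq_w : ‖(⟨(x 2).re / 2, -(x 1).re / 2⟩ : ℂ)‖ ^ 2 =
      ((x 3).im + (x 0).re) / 2 * (((x 3).im - (x 0).re) / 2) := by
    rw [Complex.sq_norm, normSq_mk]
    linear_combination cone_eq / 4
  obtain ⟨z₀, z₁, hz₀, hz₁, hw⟩ :=
    exists_norm_sq_eq_and_mul_conj_eq (by linarith) (by linarith) norm_sq_w
  rw [Complex.sq_norm] at hz₀ hz₁
  have coord0 : normSq z₀ - normSq z₁ = (x 0).re := by rw [hz₀, hz₁]; ring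
  have coord1 : -2 * (z₀ * (starRingEnd ℂ) z₁).im = (x 1).re := by rw [hw]; ring
  have coord2 : 2 * (z₀ * (starRingEnd ℂ) z₁).re = (x 2).re := by rw [hw]; ring
  have coord3 : normSq z₀ + normSq z₁ = (x 3).im := by rw [hz₀, hz₁]; ring
  refine ⟨![z₀, z₁], ?_⟩
  simp only [antidiagonalVec, Matrix.cons_val, coord0, coord1, coord2, coord3]
  ext i
  fin_cases i <;> apply Complex.ext <;> simp [h0, h1, h2, h3]

/-- The map `ℙ¹ → ℙ³` induced by `antidiagonalVec`, which parametrizes the anti-diagonal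
Lagrangian sphere in the quadric. -/
noncomputable def antidiagonalMap : ℙ ℂ (Fin 2 → ℂ) → ℙ ℂ (Fin 4 → ℂ) :=
  Projectivization.lift
    (fun z => Projectivization.mk ℂ (antidiagonalVec z) (antidiagonalVec_ne_zero z.2))
    fun z w a hzw => (Projectivization.mk_eq_mk_iff' ..).mpr
      ⟨(normSq a : ℂ), by rw [hzw, antidiagonalVec_smul]⟩

theorem antidiagonalMap_mk (z : Fin 2 → ℂ) (hz : z ≠ 0) :
    antidiagonalMap (Projectivization.mk ℂ z hz) =
      Projectivization.mk ℂ (antidiagonalVec z) (antidiagonalVec_ne_zero hz) :=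
  rfl

theorem mk_mem_range_antidiagonalMap {x : Fin 4 → ℂ} (hx : x ≠ 0) (hcone : x ∈ realQuadricCone) :
    Projectivization.mk ℂ x hx ∈ Set.range antidiagonalMap := by
  wlog hx3 : 0 ≤ (x 3).im generalizing x
  · have mk_neg : Projectivization.mk ℂ (-x) (neg_ne_zero.mpr hx) = Projectivization.mk ℂ x hx :=
      (Projectivization.mk_eq_mk_iff' ..).mpr ⟨-1, neg_one_smul ℂ x⟩
    rw [← mk_neg]
    exact this _ (neg_mem_realQuadricCone hcone) (by simpa using (not_le.mp hx3).le)
  obtain ⟨z, rfl⟩ := mem_range_antidiagonalVec hcone hx3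
  have hz : z ≠ 0 := by
    rintro rfl
    exact hx (by simpa using antidiagonalVec_smul 0 0)
  exact ⟨Projectivization.mk ℂ z hz, antidiagonalMap_mk z hz⟩

theorem range_antidiagonalMap :
    Set.range antidiagonalMap =
      {p | ∃ (x : Fin 4 → ℂ) (hx : x ≠ 0), p = Projectivization.mk ℂ x hx ∧
        x ∈ realQuadricCone} := by
  ext p
  constructor
  · rintro ⟨q, rfl⟩
    induction q with | h z hz =>
    exact ⟨antidiagonalVec z, antidiagonalVec_ne_zero hz, antidiagonalMap_mk z hz,
      antidiagonalVec_mem_realQuadricCone z⟩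
  · rintro ⟨x, hx, rfl, hcone⟩
    exact mk_mem_range_antidiagonalMap hx hcone

/-- The map `s : ℙ¹ → ℙ³` sending `[z₀:z₁]` to
`[|z₀|²−|z₁|² : −2 Im(z₀ conj(z₁)) : 2 Re(z₀ conj(z₁)) : i(|z₀|²+|z₁|²)]` has image equal to
the set of points of `ℙ³` admitting a homogeneous representative `(x₁,x₂,x₃,x₄)` with
`x₁² + x₂² + x₃² + x₄² = 0`, `x₁, x₂, x₃ ∈ ℝ` and `x₄ ∈ iℝ`. -/
theorem antidiagonal_image_is_real_locus :
    ∃ s : ℙ ℂ (Fin 2 → ℂ) → ℙ ℂ (Fin 4 → ℂ),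
      (∀ (z : Fin 2 → ℂ) (hz : z ≠ 0),
        ∃ hv : (![((normSq (z 0) - normSq (z 1) : ℝ) : ℂ),
                  ((-2 * (z 0 * (starRingEnd ℂ) (z 1)).im : ℝ) : ℂ),
                  ((2 * (z 0 * (starRingEnd ℂ) (z 1)).re : ℝ) : ℂ),
                  I * ((normSq (z 0) + normSq (z 1) : ℝ) : ℂ)] : Fin 4 → ℂ) ≠ 0,
          s (Projectivization.mk ℂ z hz) =
            Projectivization.mk ℂ
              ![((normSq (z 0) - normSq (z 1) : ℝ) : ℂ),
                ((-2 * (z 0 * (starRingEnd ℂ) (z 1)).im : ℝ) : ℂ),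
                ((2 * (z 0 * (starRingEnd ℂ) (z 1)).re : ℝ) : ℂ),
                I * ((normSq (z 0) + normSq (z 1) : ℝ) : ℂ)] hv) ∧
      Set.range s =
        {p : ℙ ℂ (Fin 4 → ℂ) | ∃ (x : Fin 4 → ℂ) (hx : x ≠ 0),
          p = Projectivization.mk ℂ x hx ∧
          x 0 ^ 2 + x 1 ^ 2 + x 2 ^ 2 + x 3 ^ 2 = 0 ∧
          (x 0).im = 0 ∧ (x 1).im = 0 ∧ (x 2).im = 0 ∧ (x 3).re = 0} := by
  exact ⟨antidiagonalMap, fun z hz => ⟨antidiagonalVec_ne_zero hz, antidiagonalMap_mk z hz⟩,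
    range_antidiagonalMap⟩
end
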